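/- arXiv:2009.10399 — 2 statements merged into one kernel-verified Lean document; each statement's English description precedes it below -/
import Mathlib

section
/- Let L, N be a lightlike frame along the unit-speed spacelike curve γ̂, with first component L₀(0) of L(0) nonzero, and set h̃(u) = ⟨γ̂(u), L(0)/L₀(0)⟩ − ⟨γ̂(0), L(0)/L₀(0)⟩. Then h̃(0) = 0, h̃′(0) = 0, h̃″(0) = α_L(0)/L₀(0), and h̃‴(0) = σ_L(0)/L₀(0). In particular h̃″(0) = 0 if and only if α_L(0) = 0. -/
open scoped Topology

noncomputable section

/-- Points/vectors of Lorentz–Minkowski 3-space `ℝ³₁`. -/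
abbrev R3 : Type := Fin 3 → ℝ

/-- The Lorentz–Minkowski scalar product `⟨x,y⟩ = -x₀y₀ + x₁y₁ + x₂y₂`. -/
def mink (x y : R3) : ℝ := -(x 0 * y 0) + x 1 * y 1 + x 2 * y 2

/-- `(L, N)` is a lightlike frame along the unit-speed spacelike curve `γ` on `I`:
`γ, L, N` are smooth on `I`, `⟨e,e⟩ = 1` (with `e = γ'`), `⟨e,L⟩ = ⟨e,N⟩ = 0`,
`⟨L,L⟩ = ⟨N,N⟩ = 0` and `⟨L,N⟩ = 1` on `I`. -/
structure LightlikeFrame (I : Set ℝ) (γ L N : ℝ → R3) : Prop where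
  smooth_gamma : ContDiffOn ℝ (⊤ : ℕ∞) γ I
  smooth_L : ContDiffOn ℝ (⊤ : ℕ∞) L I
  smooth_N : ContDiffOn ℝ (⊤ : ℕ∞) N I
  unit_speed : ∀ u ∈ I, mink (deriv γ u) (deriv γ u) = 1
  eL : ∀ u ∈ I, mink (deriv γ u) (L u) = 0
  eN : ∀ u ∈ I, mink (deriv γ u) (N u) = 0
  LL : ∀ u ∈ I, mink (L u) (L u) = 0
  NN : ∀ u ∈ I, mink (N u) (N u) = 0
  LN : ∀ u ∈ I, mink (L u) (N u) = 1

/-- `α_L = ⟨γ'', L⟩`. -/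
def alphaL (γ L : ℝ → R3) (u : ℝ) : ℝ := mink (deriv (deriv γ) u) (L u)

/-- `α_N = ⟨γ'', N⟩`. -/
def alphaN (γ N : ℝ → R3) (u : ℝ) : ℝ := mink (deriv (deriv γ) u) (N u)

/-- `α_G = ⟨L, N'⟩`. -/
def alphaG (L N : ℝ → R3) (u : ℝ) : ℝ := mink (L u) (deriv N u)

/-- `σ_L = α_L' + α_L α_G`. -/
def sigmaL (γ L N : ℝ → R3) (u : ℝ) : ℝ :=
  deriv (alphaL γ L) u + alphaL γ L u * alphaG L N u

/-- `σ_N = α_N' - α_N α_G`. -/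
def sigmaN (γ L N : ℝ → R3) (u : ℝ) : ℝ :=
  deriv (alphaN γ N) u - alphaN γ N u * alphaG L N u

theorem HasDerivAt.mink {f g : ℝ → R3} {f' g' : R3} {u : ℝ}
    (hf : HasDerivAt f f' u) (hg : HasDerivAt g g' u) :
    HasDerivAt (fun t => mink (f t) (g t)) (mink f' (g u) + mink (f u) g') u := by
  have hf := hasDerivAt_pi.1 hf
  have hg := hasDerivAt_pi.1 hg
  unfold _root_.mink
  exact (((((hf 0).mul (hg 0)).neg).add ((hf 1).mul (hg 1))).add
    ((hf 2).mul (hg 2))).congr_deriv (by ring)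

theorem mink_comm (x y : R3) : mink x y = mink y x := by
  unfold mink; ring

theorem mink_smul_right (c : ℝ) (x y : R3) : mink x (c • y) = c * mink x y := by
  simp only [mink, Pi.smul_apply, smul_eq_mul]; ring

/-- Expansion of the scalar product in a basis `e, l, n` with `e` a unit vector orthogonal to
the null vectors `l, n`, and `⟨l, n⟩ = 1`. -/
theorem mink_eq_of_frame {e l n : R3} (ee : mink e e = 1) (el : mink e l = 0)
    (en : mink e n = 0) (ll : mink l l = 0) (nn : mink n n = 0) (ln : mink l n = 1) (v w : R3) :
    mink v w = mink v e * mink w e + mink v l * mink w n + mink v n * mink w l := by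
  have key : (!![-e 0, e 1, e 2; -l 0, l 1, l 2; -n 0, n 1, n 2] : Matrix (Fin 3) (Fin 3) ℝ) *
      !![e 0, n 0, l 0; e 1, n 1, l 1; e 2, n 2, l 2] = 1 := by
    unfold mink at ee el en ll nn ln
    ext i j
    fin_cases i <;> fin_cases j <;>
      simp [Matrix.mul_apply, Fin.sum_univ_three] <;> linarith
  have key' := mul_eq_one_comm.1 key
  have entry := fun i j => congrFun (congrFun key' i) j
  have h00 := entry 0 0
  have h01 := entry 0 1
  have h02 := entry 0 2
  have h10 := entry 1 0
  have h11 := entry 1 1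
  have h12 := entry 1 2
  have h20 := entry 2 0
  have h21 := entry 2 1
  have h22 := entry 2 2
  simp [Matrix.mul_apply, Fin.sum_univ_three] at h00 h01 h02 h10 h11 h12 h20 h21 h22
  unfold mink
  linear_combination v 0 * w 0 * h00 + v 0 * w 1 * h01 + v 0 * w 2 * h02
    - v 1 * w 0 * h10 - v 1 * w 1 * h11 - v 1 * w 2 * h12
    - v 2 * w 0 * h20 - v 2 * w 1 * h21 - v 2 * w 2 * h22

theorem ContDiffOn.hasDerivAt_of_mem_Ioo {f : ℝ → R3} {a b u : ℝ}
    (hf : ContDiffOn ℝ (⊤ : ℕ∞) f (Set.Ioo a b)) (hu : u ∈ Set.Ioo a b) :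
    HasDerivAt f (deriv f u) u :=
  ((hf.differentiableOn (by simp)).differentiableAt (isOpen_Ioo.mem_nhds hu)).hasDerivAt

/-- In a lightlike frame, `⟨γ'', L'⟩ = -α_L α_G`. -/
theorem LightlikeFrame.mink_deriv_deriv_deriv {a b : ℝ} {γ L N : ℝ → R3}
    (hframe : LightlikeFrame (Set.Ioo a b) γ L N) {u : ℝ} (hu : u ∈ Set.Ioo a b) :
    mink (deriv (deriv γ) u) (deriv L u) = -(alphaL γ L u * alphaG L N u) := by
  have nhds_u := isOpen_Ioo.mem_nhds hu
  have he := (hframe.smooth_gamma.deriv_of_isOpen isOpen_Ioo (by simp)).hasDerivAt_of_mem_Ioo hu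
  have hL := hframe.smooth_L.hasDerivAt_of_mem_Ioo hu
  have hN := hframe.smooth_N.hasDerivAt_of_mem_Ioo hu
  have deriv_zero {f : ℝ → ℝ} {f' c : ℝ} (hf : HasDerivAt f f' u)
      (hc : ∀ t ∈ Set.Ioo a b, f t = c) : f' = 0 :=
    hf.unique ((hasDerivAt_const u c).congr_of_eventuallyEq
      (Filter.eventually_of_mem nhds_u hc))
  have ee' := deriv_zero (he.mink he) hframe.unit_speed
  have ll' := deriv_zero (hL.mink hL) hframe.LL
  have ln' := deriv_zero (hL.mink hN) hframe.LN
  rw [mink_comm (deriv γ u)] at ee'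
  rw [mink_comm (L u)] at ll'
  have ee : mink (deriv (deriv γ) u) (deriv γ u) = 0 := by linarith
  have ll : mink (deriv L u) (L u) = 0 := by linarith
  rw [mink_eq_of_frame (hframe.unit_speed u hu) (hframe.eL u hu) (hframe.eN u hu)
    (hframe.LL u hu) (hframe.NN u hu) (hframe.LN u hu), ee, ll, alphaL, alphaG]
  linear_combination mink (deriv (deriv γ) u) (L u) * ln'

/-- With `h̃(u) = ⟨γ̂(u), L(0)/L₀(0)⟩ - ⟨γ̂(0), L(0)/L₀(0)⟩` one has
`h̃(0) = 0`, `h̃'(0) = 0`, `h̃''(0) = α_L(0)/L₀(0)` and `h̃'''(0) = σ_L(0)/L₀(0)`;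
in particular `h̃''(0) = 0` iff `α_L(0) = 0`. -/
theorem height_function_derivatives (a b : ℝ) (γ L N : ℝ → R3)
    (hframe : LightlikeFrame (Set.Ioo a b) γ L N)
    (h0 : (0 : ℝ) ∈ Set.Ioo a b) (hL0 : L 0 0 ≠ 0)
    (h : ℝ → ℝ)
    (hh : ∀ u, h u = mink (γ u) ((L 0 0)⁻¹ • L 0) - mink (γ 0) ((L 0 0)⁻¹ • L 0)) :
    h 0 = 0 ∧ deriv h 0 = 0 ∧
    deriv (deriv h) 0 = alphaL γ L 0 / L 0 0 ∧
    deriv^[3] h 0 = sigmaL γ L N 0 / L 0 0 ∧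
    (deriv (deriv h) 0 = 0 ↔ alphaL γ L 0 = 0) := by
  have nhds_zero := isOpen_Ioo.mem_nhds h0
  have smooth_e := hframe.smooth_gamma.deriv_of_isOpen (m := (⊤ : ℕ∞)) isOpen_Ioo (by simp)
  have smooth_e' := smooth_e.deriv_of_isOpen (m := (⊤ : ℕ∞)) isOpen_Ioo (by simp)
  have hasDerivAt_mink_const {f : ℝ → R3} (hf : ContDiffOn ℝ (⊤ : ℕ∞) f (Set.Ioo a b))
      (c : R3) {u : ℝ} (hu : u ∈ Set.Ioo a b) :
      HasDerivAt (fun t => mink (f t) c) (mink (deriv f u) c) u :=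
    ((hf.hasDerivAt_of_mem_Ioo hu).mink (hasDerivAt_const u c)).congr_deriv (by simp [mink])
  set c : R3 := (L 0 0)⁻¹ • L 0 with hc
  have d1 : ∀ u ∈ Set.Ioo a b, deriv h u = mink (deriv γ u) c := fun u hu => by
    rw [funext hh]
    exact ((hasDerivAt_mink_const hframe.smooth_gamma c hu).sub_const _).deriv
  have d2 : ∀ u ∈ Set.Ioo a b, deriv (deriv h) u = mink (deriv (deriv γ) u) c := fun u hu =>
    ((hasDerivAt_mink_const smooth_e c hu).congr_of_eventuallyEq
      (Filter.eventually_of_mem (isOpen_Ioo.mem_nhds hu) d1)).deriv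
  have d3 : deriv (deriv (deriv h)) 0 = mink (deriv (deriv (deriv γ)) 0) c :=
    ((hasDerivAt_mink_const smooth_e' c h0).congr_of_eventuallyEq
      (Filter.eventually_of_mem nhds_zero d2)).deriv
  have alphaL_deriv : deriv (alphaL γ L) 0 =
      mink (deriv (deriv (deriv γ)) 0) (L 0) + mink (deriv (deriv γ) 0) (deriv L 0) :=
    ((smooth_e'.hasDerivAt_of_mem_Ioo h0).mink
      (hframe.smooth_L.hasDerivAt_of_mem_Ioo h0)).deriv
  have h2 : deriv (deriv h) 0 = alphaL γ L 0 / L 0 0 := by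
    rw [d2 0 h0, hc, mink_smul_right, alphaL, div_eq_inv_mul]
  refine ⟨by rw [hh, sub_self], ?_, h2, ?_, ?_⟩
  · rw [d1 0 h0, hc, mink_smul_right, hframe.eL 0 h0, mul_zero]
  · change deriv (deriv (deriv h)) 0 = _
    rw [d3, hc, mink_smul_right, sigmaL, alphaL_deriv, hframe.mink_deriv_deriv_deriv h0,
      neg_add_cancel_right, div_eq_inv_mul]
  · rw [h2, div_eq_zero_iff, or_iff_left hL0]
end
end

section
/- Let L, N be a lightlike frame along the unit-speed spacelike curve γ̂, fix u ∈ I with α_L(u) ≠ 0, and set H_L(u,x) = ⟨x − γ̂(u), L(u)⟩ and (∂H_L/∂u)(u,x) = ⟨x − γ̂(u), −α_L(u) e(u) − α_G(u) L(u)⟩. Then a point x ∈ ℝ³₁ satisfies H_L(u,x) = 0 and (∂H_L/∂u)(u,x) = 0 if and only if x = γ̂(u) + v L(u) for some v ∈ ℝ. Similarly, if α_N(u) ≠ 0, then ⟨x − γ̂(u), N(u)⟩ = 0 and ⟨x − γ̂(u), −α_N(u) e(u) + α_G(u) N(u)⟩ = 0 hold if and only if x = γ̂(u) + v N(u) for some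 v ∈ ℝ. -/
open scoped Topology

noncomputable section

/-- Expansion of a vector in a frame `e, L, N` with `⟨e,e⟩ = ⟨L,N⟩ = 1` and all other products
zero. -/
theorem mink_frame_expansion {e L N : R3} (ee : mink e e = 1) (eL : mink e L = 0)
    (eN : mink e N = 0) (LL : mink L L = 0) (NN : mink N N = 0) (LN : mink L N = 1) (w : R3) :
    w = mink w e • e + mink w N • L + mink w L • N := by
  have hAB : !![-e 0, e 1, e 2; -N 0, N 1, N 2; -L 0, L 1, L 2] *
      !![e 0, L 0, N 0; e 1, L 1, N 1; e 2, L 2, N 2] = (1 : Matrix (Fin 3) (Fin 3) ℝ) := by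
    simp only [mink] at ee eL eN LL NN LN
    ext i j
    fin_cases i <;> fin_cases j <;> simp [Matrix.mul_apply, Fin.sum_univ_three] <;> linarith
  have hBA := congrArg (fun M => Matrix.mulVec M w) (mul_eq_one_comm.mp hAB)
  rw [Matrix.one_mulVec] at hBA
  ext i
  have hi := congrFun hBA i
  fin_cases i <;>
    simp [Matrix.mulVec, dotProduct, Matrix.mul_apply, Fin.sum_univ_three, mink] at hi ⊢ <;>
    linarith

theorem mink_smul_add_smul_right (w x y : R3) (c d : ℝ) :
    mink w (c • x + d • y) = c * mink w x + d * mink w y := by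
  simp [mink]; ring

theorem mink_smul_left (c : ℝ) (x y : R3) : mink (c • x) y = c * mink x y := by
  simp [mink]; ring

/-- The affine line `p + ℝ L` in the direction of a null frame vector `L` is cut out by the
products with `L` and with any combination of `e` and `L` having nonzero `e`-coefficient. -/
theorem mink_eq_zero_iff_mem_null_line {e L N : R3} (ee : mink e e = 1) (eL : mink e L = 0)
    (eN : mink e N = 0) (LL : mink L L = 0) (NN : mink N N = 0) (LN : mink L N = 1)
    {c : ℝ} (hc : c ≠ 0) (d : ℝ) (p x : R3) :
    (mink (x - p) L = 0 ∧ mink (x - p) (c • e + d • L) = 0) ↔ ∃ v : ℝ, x = p + v • L := by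
  rw [mink_smul_add_smul_right]
  constructor
  · rintro ⟨hL, he⟩
    have he' : mink (x - p) e = 0 := by simpa [hL, hc] using he
    refine ⟨mink (x - p) N, ?_⟩
    have hw := mink_frame_expansion ee eL eN LL NN LN (x - p)
    rw [he', hL, zero_smul, zero_smul, zero_add, add_zero] at hw
    rw [← hw, add_sub_cancel]
  · rintro ⟨v, rfl⟩
    simp [mink_smul_left, LL, mink_comm L e, eL]

/-- If `α_L(u) ≠ 0`, then `x` satisfies `H_L(u,x) = 0` and
`(∂H_L/∂u)(u,x) = ⟨x - γ̂(u), -α_L e - α_G L⟩ = 0` iff `x = γ̂(u) + v L(u)` for some `v`;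
similarly for `H_N` when `α_N(u) ≠ 0`. -/
theorem discriminant_of_height_functions (a b : ℝ) (γ L N : ℝ → R3)
    (hframe : LightlikeFrame (Set.Ioo a b) γ L N)
    (u : ℝ) (hu : u ∈ Set.Ioo a b) :
    (alphaL γ L u ≠ 0 → ∀ x : R3,
      ((mink (x - γ u) (L u) = 0 ∧
        mink (x - γ u) (-(alphaL γ L u) • deriv γ u - alphaG L N u • L u) = 0) ↔
       ∃ v : ℝ, x = γ u + v • L u)) ∧
    (alphaN γ N u ≠ 0 → ∀ x : R3,
      ((mink (x - γ u) (N u) = 0 ∧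
        mink (x - γ u) (-(alphaN γ N u) • deriv γ u + alphaG L N u • N u) = 0) ↔
       ∃ v : ℝ, x = γ u + v • N u)) := by
  have ee := hframe.unit_speed u hu
  have eL := hframe.eL u hu
  have eN := hframe.eN u hu
  have LL := hframe.LL u hu
  have NN := hframe.NN u hu
  have LN := hframe.LN u hu
  refine ⟨fun h x => ?_, fun h x => ?_⟩
  · rw [sub_eq_add_neg (_ • _), ← neg_smul (alphaG L N u)]
    exact mink_eq_zero_iff_mem_null_line ee eL eN LL NN LN (neg_ne_zero.mpr h) _ _ _
  · exact mink_eq_zero_iff_mem_null_line ee eN eL NN LL ((mink_comm _ _).trans LN)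
      (neg_ne_zero.mpr h) _ _ _
end
end
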